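/- Let W be a Weyl field on ℝ⁴ (a smooth map assigning to each point a Weyl tensor and satisfying the vacuum Bianchi equations Σ_{α,μ} η^{αμ} ∂_μ W_{αβγδ} = 0 and ∂_λ W_{αβγδ} + ∂_α W_{βλγδ} + ∂_β W_{λαγδ} = 0), let Q be its Bel-Robinson tensor field, let T = (1,0,0,0), and let K₀ be the conformal Morawetz field with components K₀⁰ = t² + |x|², K₀ⁱ = 2t xⁱ. Then the energy current P_α := Σ_{β,γ,δ} Q_{αβγδ} K₀^β T^γ T^δ is divergence-free: Σ_{α,μ} η^{αμ} ∂_μ P_α = 0 on all of ℝ⁴. -/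

import Mathlib

/-- The Minkowski metric `η` on `ℝ⁴` (and its inverse, which has the same components):
`η_{00} = -1`, `η_{11} = η_{22} = η_{33} = 1`, off-diagonal components zero. -/
noncomputable def eta (μ ν : Fin 4) : ℝ :=
  if μ = ν then (if μ = 0 then -1 else 1) else 0

/-- The Levi-Civita symbol on four indices, totally antisymmetric with `ε_{0123} = 1`. -/
noncomputable def eps4 (i j k l : Fin 4) : ℝ :=
  ((((j : ℕ) : ℝ) - ((i : ℕ) : ℝ)) * (((k : ℕ) : ℝ) - ((i : ℕ) : ℝ)) *
    (((l : ℕ) : ℝ) - ((i : ℕ) : ℝ)) * (((k : ℕ) : ℝ) - ((j : ℕ) : ℝ)) *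
    (((l : ℕ) : ℝ) - ((j : ℕ) : ℝ)) * (((l : ℕ) : ℝ) - ((k : ℕ) : ℝ))) / 12

/-- A Weyl tensor on `(ℝ⁴, η)`: antisymmetric in the first and last pairs of indices,
symmetric under exchange of the pairs, satisfying the first Bianchi identity, and
trace-free. -/
def IsWeylTensor (W : Fin 4 → Fin 4 → Fin 4 → Fin 4 → ℝ) : Prop :=
  (∀ α β γ δ, W α β γ δ = -W β α γ δ) ∧
  (∀ α β γ δ, W α β γ δ = -W α β δ γ) ∧
  (∀ α β γ δ, W α β γ δ = W γ δ α β) ∧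
  (∀ α β γ δ, W α β γ δ + W α γ δ β + W α δ β γ = 0) ∧
  (∀ α β, ∑ μ, ∑ ν, eta μ ν * W μ α ν β = 0)

/-- The Hodge dual `(*W)_{αβγδ} = (1/2) Σ η^{ρμ} η^{σν} ε_{αβρσ} W_{μνγδ}`. -/
noncomputable def hodge (W : Fin 4 → Fin 4 → Fin 4 → Fin 4 → ℝ)
    (α β γ δ : Fin 4) : ℝ :=
  (1 / 2) * ∑ μ, ∑ ν, ∑ ρ, ∑ σ, eta ρ μ * eta σ ν * eps4 α β ρ σ * W μ ν γ δ

/-- The Bel-Robinson tensor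
`Q_{αβγδ} = Σ η^{μρ} η^{νσ} (W_{αμβν} W_{γρδσ} + (*W)_{αμβν} (*W)_{γρδσ})`. -/
noncomputable def belRobinson (W : Fin 4 → Fin 4 → Fin 4 → Fin 4 → ℝ)
    (α β γ δ : Fin 4) : ℝ :=
  ∑ μ, ∑ ν, ∑ ρ, ∑ σ, eta μ ρ * eta ν σ *
    (W α μ β ν * W γ ρ δ σ + hodge W α μ β ν * hodge W γ ρ δ σ)

/-- The partial derivative `∂_μ f` on `ℝ⁴`. -/
noncomputable def pd4 (f : (Fin 4 → ℝ) → ℝ) (μ : Fin 4) (p : Fin 4 → ℝ) : ℝ :=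
  fderiv ℝ f p (Pi.single μ 1)

/-- The timelike multiplier `T = (1,0,0,0)`. -/
noncomputable def Tvec (μ : Fin 4) : ℝ := if μ = 0 then 1 else 0

/-- The conformal Morawetz vector field `K₀` on Minkowski space, with components
`K₀⁰ = t² + |x|²` and `K₀ⁱ = 2 t xⁱ`; here `t = p 0`. -/
noncomputable def morawetzK (p : Fin 4 → ℝ) (μ : Fin 4) : ℝ :=
  if μ = 0 then (p 0) ^ 2 + ((p 1) ^ 2 + (p 2) ^ 2 + (p 3) ^ 2) else 2 * p 0 * p μ

/-- The energy current `P_α = Σ Q_{αβγδ} K₀^β T^γ T^δ`. -/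
noncomputable def morawetzCurrent (W : (Fin 4 → ℝ) → Fin 4 → Fin 4 → Fin 4 → Fin 4 → ℝ)
    (α : Fin 4) (p : Fin 4 → ℝ) : ℝ :=
  ∑ β, ∑ γ, ∑ δ, belRobinson (W p) α β γ δ * morawetzK p β * Tvec γ * Tvec δ

/-!
For a fixed last pair of indices, a vacuum Weyl field is a Maxwell field: its field equations are
the two Bianchi identities. The Bel-Robinson tensor `Q` is the corresponding sum of Maxwell stress
tensors, which makes it trace-free in its first and third indices, divergence-free, and symmetric
under the exchanges `1 ↔ 3` and `2 ↔ 4`. Exchanging the first two indices changes `Q_{αβγδ}` by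
half of `W_{αβ} · W_{γδ} + *W_{αβ} · *W_{γδ}`, which vanishes because the Hodge star is an
anti-isometry of two-forms in Lorentzian signature; hence `Q` is totally symmetric and trace-free.

A symmetric, trace-free, divergence-free tensor stays divergence-free when one of its slots is
contracted with a conformal Killing field `X`, because `∂_μ X_ν` is skew up to a multiple of `η`.
Applying this to three slots of `Q` in turn, with `T`, `T` and `K₀`, gives the conserved current.
-/

section Contraction

variable {ι R : Type*} [Fintype ι] [CommRing R] {A M : ι → ι → R}

theorem two_mul_sum_mul_of_symm (hA : ∀ i j, A i j = A j i) :
    2 * ∑ i, ∑ j, A i j * M i j = ∑ i, ∑ j, A i j * (M i j + M j i) := by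
  have swap : ∑ i, ∑ j, A i j * M i j = ∑ i, ∑ j, A i j * M j i := by
    rw [Finset.sum_comm]
    simp only [hA]
  simp only [mul_add, Finset.sum_add_distrib, ← swap, two_mul]

theorem two_mul_sum_mul_of_antisymm (hA : ∀ i j, A i j = -A j i) :
    2 * ∑ i, ∑ j, A i j * M i j = ∑ i, ∑ j, A i j * (M i j - M j i) := by
  have swap : ∑ i, ∑ j, A i j * M i j = -∑ i, ∑ j, A i j * M j i := by
    rw [Finset.sum_comm]
    simp only [← Finset.sum_neg_distrib, ← neg_mul, ← hA]
  simp only [mul_sub, Finset.sum_sub_distrib, two_mul]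
  rw [eq_sub_iff_add_eq, add_assoc]
  nth_rewrite 2 [swap]
  simp

theorem sum_mul_sum_mul_comm {κ : Type*} [Fintype κ] (a : ι → R) (b : κ → R) (M : ι → κ → R) :
    ∑ i, a i * ∑ j, b j * M i j = ∑ j, b j * ∑ i, a i * M i j := by
  simp only [Finset.mul_sum]
  rw [Finset.sum_comm]
  exact Finset.sum_congr rfl fun j _ => Finset.sum_congr rfl fun i _ => mul_left_comm ..

end Contraction

theorem eta_comm (μ ν : Fin 4) : eta μ ν = eta ν μ := by
  unfold eta
  grind

theorem sum_eta_mul (f : Fin 4 → ℝ) (μ : Fin 4) : ∑ ν, eta μ ν * f ν = eta μ μ * f μ := by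
  simp [eta]

theorem eta_mul_self (μ : Fin 4) : eta μ μ * eta μ μ = 1 := by
  unfold eta
  grind

/-- The components `F_{μν}` form a two-form, i.e. an antisymmetric covariant 2-tensor. -/
def IsTwoForm (F : Fin 4 → Fin 4 → ℝ) : Prop :=
  ∀ μ ν, F μ ν = -F ν μ

/-- The Hodge star `(*F)_{αβ} = (1/2) ε_{αβ}^{μν} F_{μν}` of a two-form on Minkowski space; indices
are raised with the diagonal entries of `η`. -/
noncomputable def hodgeStar (F : Fin 4 → Fin 4 → ℝ) (α β : Fin 4) : ℝ :=
  (1 / 2) * ∑ μ, ∑ ν, eta μ μ * eta ν ν * eps4 α β μ ν * F μ ν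

/-- The contraction `F · G = F_{μν} G^{μν}` of two-forms. The sum is over ordered pairs `(μ, ν)`, so
this is twice the inner product for which the `dx^μ ∧ dx^ν` with `μ < ν` are orthonormal. -/
noncomputable def twoFormInner (F G : Fin 4 → Fin 4 → ℝ) : ℝ :=
  ∑ μ, ∑ ν, eta μ μ * eta ν ν * (F μ ν * G μ ν)

/-- The two-form with electric part `e` and magnetic part `b`: `F_{0i} = e_i` and
`F_{ij} = ε_{ijk} b_k`. -/
def faraday (e b : Fin 3 → ℝ) : Fin 4 → Fin 4 → ℝ :=
  ![![0, e 0, e 1, e 2], ![-e 0, 0, b 2, -b 1], ![-e 1, -b 2, 0, b 0], ![-e 2, b 1, -b 0, 0]]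

theorem IsTwoForm.exists_eq_faraday {F : Fin 4 → Fin 4 → ℝ} (hF : IsTwoForm F) :
    ∃ e b, F = faraday e b := by
  have diag : ∀ μ, F μ μ = 0 := fun μ => self_eq_neg.mp (hF μ μ)
  refine ⟨![F 0 1, F 0 2, F 0 3], ![F 2 3, F 3 1, F 1 2], ?_⟩
  funext μ ν
  fin_cases μ <;> fin_cases ν <;> first | exact diag _ | exact hF _ _ | rfl

theorem hodgeStar_faraday (e b : Fin 3 → ℝ) : hodgeStar (faraday e b) = faraday b (-e) := by
  funext μ ν
  fin_cases μ <;> fin_cases ν <;>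
    simp [hodgeStar, faraday, eta, eps4, Fin.sum_univ_four] <;> ring

theorem isTwoForm_hodgeStar (F : Fin 4 → Fin 4 → ℝ) : IsTwoForm (hodgeStar F) := by
  intro α β
  have eps_swap : ∀ μ ν, eps4 α β μ ν = -eps4 β α μ ν := fun μ ν => by unfold eps4; ring
  simp only [hodgeStar, eps_swap, mul_neg, neg_mul, Finset.sum_neg_distrib]

theorem sum_hodgeStar_mul_hodgeStar {F G : Fin 4 → Fin 4 → ℝ} (hF : IsTwoForm F)
    (hG : IsTwoForm G) (α γ : Fin 4) :
    ∑ μ, eta μ μ * (hodgeStar F α μ * hodgeStar G γ μ) =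
      ∑ μ, eta μ μ * (G α μ * F γ μ) - 1 / 2 * eta α γ * twoFormInner F G := by
  obtain ⟨e, b, rfl⟩ := hF.exists_eq_faraday
  obtain ⟨e', b', rfl⟩ := hG.exists_eq_faraday
  simp only [hodgeStar_faraday, twoFormInner]
  fin_cases α <;> fin_cases γ <;> simp [faraday, eta, Fin.sum_univ_four] <;> ring

theorem twoFormInner_hodgeStar {F G : Fin 4 → Fin 4 → ℝ} (hF : IsTwoForm F)
    (hG : IsTwoForm G) : twoFormInner (hodgeStar F) (hodgeStar G) = -twoFormInner F G := by
  obtain ⟨e, b, rfl⟩ := hF.exists_eq_faraday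
  obtain ⟨e', b', rfl⟩ := hG.exists_eq_faraday
  simp only [hodgeStar_faraday, twoFormInner]
  simp [faraday, eta, Fin.sum_univ_four]
  ring

theorem hodgeStar_cyclic {D : Fin 4 → Fin 4 → Fin 4 → ℝ} (hD : ∀ l, IsTwoForm (D l))
    (hdiv : ∀ κ, ∑ l, eta l l * D l l κ = 0) (l α β : Fin 4) :
    hodgeStar (D l) α β + hodgeStar (D α) β l + hodgeStar (D β) l α = 0 := by
  choose e b hD using fun l => (hD l).exists_eq_faraday
  obtain rfl : D = fun l => faraday (e l) (b l) := funext hD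
  have d0 := hdiv 0
  have d1 := hdiv 1
  have d2 := hdiv 2
  have d3 := hdiv 3
  simp only [hodgeStar_faraday]
  simp [faraday, eta, Fin.sum_univ_four] at d0 d1 d2 d3
  fin_cases l <;> fin_cases α <;> fin_cases β <;> simp [faraday] <;> linarith

/-- The polarized Maxwell stress tensor
`F_{αμ} G_γ^μ + G_{αμ} F_γ^μ - (1/2) η_{αγ} F · G` of two electromagnetic fields; for `F = G` it is
twice the energy-momentum tensor of `F`. -/
noncomputable def maxwellStress (F G : Fin 4 → Fin 4 → ℝ) (α γ : Fin 4) : ℝ :=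
  ∑ μ, eta μ μ * (F α μ * G γ μ + G α μ * F γ μ) - 1 / 2 * eta α γ * twoFormInner F G

theorem maxwellStress_comm (F G : Fin 4 → Fin 4 → ℝ) : maxwellStress F G = maxwellStress G F := by
  funext α γ
  simp only [maxwellStress, twoFormInner, mul_comm, add_comm]

theorem maxwellStress_symm (F G : Fin 4 → Fin 4 → ℝ) (α γ : Fin 4) :
    maxwellStress F G α γ = maxwellStress F G γ α := by
  simp only [maxwellStress, eta_comm α γ, mul_comm, add_comm]

theorem trace_maxwellStress (F G : Fin 4 → Fin 4 → ℝ) :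
    ∑ α, eta α α * maxwellStress F G α α = 0 := by
  have trace_eta : ∑ α, eta α α * (1 / 2 * eta α α * twoFormInner F G) = 2 * twoFormInner F G := by
    simp only [← mul_assoc, mul_right_comm _ (1 / 2 : ℝ), eta_mul_self]
    simp
    ring
  have trace_mul : ∑ α, eta α α * ∑ μ, eta μ μ * (F α μ * G α μ + G α μ * F α μ) =
      2 * twoFormInner F G := by
    simp only [twoFormInner, Finset.mul_sum]
    exact Finset.sum_congr rfl fun α _ => Finset.sum_congr rfl fun μ _ => by ring
  simp only [maxwellStress, mul_sub, Finset.sum_sub_distrib, trace_eta, trace_mul, sub_self]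

theorem maxwellStress_eq_sum_hodgeStar {F G : Fin 4 → Fin 4 → ℝ} (hF : IsTwoForm F)
    (hG : IsTwoForm G) (α γ : Fin 4) :
    maxwellStress F G α γ =
      ∑ μ, eta μ μ * (F α μ * G γ μ + hodgeStar F α μ * hodgeStar G γ μ) := by
  simp only [maxwellStress, mul_add, Finset.sum_add_distrib, sum_hodgeStar_mul_hodgeStar hF hG,
    add_sub_assoc]

/-- An algebraic curvature tensor: antisymmetric in each pair of indices and satisfying the first
Bianchi identity, but with no condition on its traces. -/
structure IsCurvatureLike {ι : Type*} (R : ι → ι → ι → ι → ℝ) : Prop where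
  antisymm_left : ∀ α β γ δ, R α β γ δ = -R β α γ δ
  antisymm_right : ∀ α β γ δ, R α β γ δ = -R α β δ γ
  cyclic : ∀ α β γ δ, R α β γ δ + R β γ α δ + R γ α β δ = 0

namespace IsCurvatureLike

theorem pair_symm {ι : Type*} {R : ι → ι → ι → ι → ℝ} (hR : IsCurvatureLike R) (α β γ δ : ι) :
    R α β γ δ = R γ δ α β := by
  obtain ⟨left, right, cyclic⟩ := hR
  -- Four faces of Milnor's octahedron; its six vertices are the components that occur.
  have h₁ : R α β γ δ + R β γ α δ + R γ α β δ = 0 := cyclic α β γ δ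
  have h₂ : R β γ α δ + R γ δ α β + R β δ γ α = 0 := by
    linarith [cyclic β γ δ α, right β γ δ α, right γ δ β α, left δ β γ α]
  have h₃ : R γ δ α β + R α δ β γ + R γ α β δ = 0 := by
    linarith [cyclic γ δ α β, left δ α γ β, right α δ γ β, left α γ δ β, right γ α δ β]
  have h₄ : R α β γ δ + R α δ β γ + R β δ γ α = 0 := by
    linarith [cyclic δ α β γ, left δ α β γ, right α β δ γ, right β δ α γ]
  linarith

theorem sum_sub_mul_eq_twoFormInner {R : Fin 4 → Fin 4 → Fin 4 → Fin 4 → ℝ}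
    (hR : IsCurvatureLike R) (α β γ δ : Fin 4) :
    2 * ∑ μ, ∑ ν, eta μ μ * eta ν ν * ((R α μ β ν - R β μ α ν) * R γ μ δ ν) =
      twoFormInner (R α β) (R γ δ) := by
  have cyclic : ∀ α β μ ν, R α μ β ν - R β μ α ν = R α β μ ν := fun α β μ ν => by
    linarith [hR.cyclic α μ β ν, hR.antisymm_left β α μ ν, hR.antisymm_left μ β α ν]
  calc 2 * ∑ μ, ∑ ν, eta μ μ * eta ν ν * ((R α μ β ν - R β μ α ν) * R γ μ δ ν)
      = 2 * ∑ μ, ∑ ν, eta μ μ * eta ν ν * R α β μ ν * R γ μ δ ν := by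
        simp only [cyclic, mul_assoc]
    _ = ∑ μ, ∑ ν, eta μ μ * eta ν ν * R α β μ ν * (R γ μ δ ν - R γ ν δ μ) :=
        two_mul_sum_mul_of_antisymm fun μ ν => by rw [hR.antisymm_right α β μ ν]; ring
    _ = twoFormInner (R α β) (R γ δ) := by
        have cyclic' : ∀ μ ν, R γ μ δ ν - R γ ν δ μ = R γ δ μ ν := fun μ ν => by
          rw [hR.pair_symm γ ν, cyclic]
        simp only [cyclic', twoFormInner, mul_assoc]

end IsCurvatureLike

theorem hodge_eq_hodgeStar (W : Fin 4 → Fin 4 → Fin 4 → Fin 4 → ℝ) (α β γ δ : Fin 4) :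
    hodge W α β γ δ = hodgeStar (fun μ ν => W μ ν γ δ) α β := by
  simp only [hodge, hodgeStar, mul_assoc]
  congr 1
  refine Finset.sum_congr rfl fun μ _ => Finset.sum_congr rfl fun ν _ => ?_
  simp only [eta_comm _ μ, eta_comm _ ν, ← Finset.mul_sum, sum_eta_mul]

theorem belRobinson_eq_sum (W : Fin 4 → Fin 4 → Fin 4 → Fin 4 → ℝ) (α β γ δ : Fin 4) :
    belRobinson W α β γ δ = ∑ μ, ∑ ν, eta μ μ * eta ν ν *
      (W α μ β ν * W γ μ δ ν + hodge W α μ β ν * hodge W γ μ δ ν) := by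
  refine Finset.sum_congr rfl fun μ _ => Finset.sum_congr rfl fun ν _ => ?_
  simp only [mul_assoc, ← Finset.mul_sum, sum_eta_mul]

theorem belRobinson_eq_sum_maxwellStress {W : Fin 4 → Fin 4 → Fin 4 → Fin 4 → ℝ}
    (hW : ∀ γ δ, IsTwoForm fun α β => W α β γ δ) (α β γ δ : Fin 4) :
    belRobinson W α β γ δ =
      ∑ ν, eta ν ν * maxwellStress (fun σ τ => W σ τ β ν) (fun σ τ => W σ τ δ ν) α γ := by
  rw [belRobinson_eq_sum, Finset.sum_comm]
  simp only [maxwellStress_eq_sum_hodgeStar (hW _ _) (hW _ _), hodge_eq_hodgeStar,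
    mul_assoc, mul_left_comm (eta _ _) (eta _ _), Finset.mul_sum]

namespace IsWeylTensor

variable {W : Fin 4 → Fin 4 → Fin 4 → Fin 4 → ℝ}

theorem isTwoForm (hW : IsWeylTensor W) (γ δ : Fin 4) : IsTwoForm fun α β => W α β γ δ :=
  fun α β => hW.1 α β γ δ

theorem isCurvatureLike (hW : IsWeylTensor W) : IsCurvatureLike W := by
  obtain ⟨left, right, pair, cyclic, -⟩ := hW
  refine ⟨left, right, fun α β γ δ => ?_⟩
  linarith [cyclic δ γ α β, left δ γ α β, left δ α β γ, left δ β γ α,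
    pair γ δ α β, pair α δ β γ, pair β δ γ α]

theorem isCurvatureLike_hodge (hW : IsWeylTensor W) : IsCurvatureLike (hodge W) where
  antisymm_left α β γ δ := by
    simpa only [hodge_eq_hodgeStar] using isTwoForm_hodgeStar _ α β
  antisymm_right α β γ δ := by
    simp only [hodge, hW.2.1 _ _ γ δ, mul_neg, Finset.sum_neg_distrib]
  cyclic α β γ δ := by
    have trace : ∀ κ, ∑ l, eta l l * W l κ l δ = 0 := fun κ => by
      simpa only [sum_eta_mul] using hW.2.2.2.2 κ δ
    have h := hodgeStar_cyclic (fun l => hW.isTwoForm l δ) trace γ α β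
    simp only [hodge_eq_hodgeStar]
    linarith

theorem belRobinson_swap_one_two (hW : IsWeylTensor W) (α β γ δ : Fin 4) :
    belRobinson W α β γ δ = belRobinson W β α γ δ := by
  have inner_hodge : twoFormInner (hodge W α β) (hodge W γ δ) =
      -twoFormInner (W α β) (W γ δ) := by
    have form : ∀ α β, W α β = fun μ ν => W μ ν α β := fun α β =>
      funext₂ fun μ ν => hW.2.2.1 α β μ ν
    have dual : ∀ α β, hodge W α β = hodgeStar (W α β) := fun α β => by
      funext μ ν
      rw [hW.isCurvatureLike_hodge.pair_symm, hodge_eq_hodgeStar, form α β]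
    rw [dual, dual]
    exact twoFormInner_hodgeStar (hW.2.1 α β) (hW.2.1 γ δ)
  have h := hW.isCurvatureLike.sum_sub_mul_eq_twoFormInner α β γ δ
  have h' := hW.isCurvatureLike_hodge.sum_sub_mul_eq_twoFormInner α β γ δ
  simp only [belRobinson_eq_sum]
  simp only [sub_mul, mul_sub, mul_add, Finset.sum_add_distrib, Finset.sum_sub_distrib] at h h' ⊢
  linarith

theorem belRobinson_swap_one_three (hW : IsWeylTensor W) (α β γ δ : Fin 4) :
    belRobinson W α β γ δ = belRobinson W γ β α δ := by
  simp only [belRobinson_eq_sum_maxwellStress hW.isTwoForm, maxwellStress_symm _ _ α γ]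

theorem belRobinson_swap_two_four (hW : IsWeylTensor W) (α β γ δ : Fin 4) :
    belRobinson W α β γ δ = belRobinson W α δ γ β := by
  simp only [belRobinson_eq_sum_maxwellStress hW.isTwoForm]
  exact Finset.sum_congr rfl fun ν _ => by rw [maxwellStress_comm]

theorem belRobinson_swap_one_four (hW : IsWeylTensor W) (α β γ δ : Fin 4) :
    belRobinson W α β γ δ = belRobinson W δ β γ α := by
  rw [hW.belRobinson_swap_one_two, hW.belRobinson_swap_two_four, hW.belRobinson_swap_one_two]

theorem belRobinson_swap_two_three (hW : IsWeylTensor W) (α β γ δ : Fin 4) :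
    belRobinson W α β γ δ = belRobinson W α γ β δ := by
  rw [hW.belRobinson_swap_one_three, hW.belRobinson_swap_one_two, hW.belRobinson_swap_one_three]

theorem belRobinson_swap_three_four (hW : IsWeylTensor W) (α β γ δ : Fin 4) :
    belRobinson W α β γ δ = belRobinson W α β δ γ := by
  rw [hW.belRobinson_swap_one_three, hW.belRobinson_swap_one_four, hW.belRobinson_swap_one_three]

theorem trace_one_three_belRobinson (hW : IsWeylTensor W) (β δ : Fin 4) :
    ∑ α, eta α α * belRobinson W α β α δ = 0 := by
  simp only [belRobinson_eq_sum_maxwellStress hW.isTwoForm, sum_mul_sum_mul_comm,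
    trace_maxwellStress, mul_zero, Finset.sum_const_zero]

theorem trace_one_two_belRobinson (hW : IsWeylTensor W) (γ δ : Fin 4) :
    ∑ α, eta α α * belRobinson W α α γ δ = 0 := by
  simp only [hW.belRobinson_swap_two_three _ _ γ, hW.trace_one_three_belRobinson]

theorem trace_one_four_belRobinson (hW : IsWeylTensor W) (β γ : Fin 4) :
    ∑ α, eta α α * belRobinson W α β γ α = 0 := by
  simp only [hW.belRobinson_swap_three_four _ _ γ, hW.trace_one_three_belRobinson]

end IsWeylTensor

section PartialDerivative

variable {f g : (Fin 4 → ℝ) → ℝ} {p : Fin 4 → ℝ}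

theorem pd4_const (c : ℝ) (μ : Fin 4) (p : Fin 4 → ℝ) : pd4 (fun _ => c) μ p = 0 := by
  simp [pd4]

theorem pd4_neg (f : (Fin 4 → ℝ) → ℝ) (μ : Fin 4) (p : Fin 4 → ℝ) :
    pd4 (fun q => -f q) μ p = -pd4 f μ p := by
  simp [pd4, fderiv_fun_neg]

theorem pd4_add (hf : DifferentiableAt ℝ f p) (hg : DifferentiableAt ℝ g p) (μ : Fin 4) :
    pd4 (fun q => f q + g q) μ p = pd4 f μ p + pd4 g μ p := by
  simp [pd4, fderiv_fun_add hf hg]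

theorem pd4_sub (hf : DifferentiableAt ℝ f p) (hg : DifferentiableAt ℝ g p) (μ : Fin 4) :
    pd4 (fun q => f q - g q) μ p = pd4 f μ p - pd4 g μ p := by
  simp [pd4, fderiv_fun_sub hf hg]

theorem pd4_mul (hf : DifferentiableAt ℝ f p) (hg : DifferentiableAt ℝ g p) (μ : Fin 4) :
    pd4 (fun q => f q * g q) μ p = pd4 f μ p * g p + f p * pd4 g μ p := by
  simp only [pd4, fderiv_fun_mul hf hg, add_apply, smul_apply, smul_eq_mul]
  ring

theorem pd4_const_mul (hf : DifferentiableAt ℝ f p) (c : ℝ) (μ : Fin 4) :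
    pd4 (fun q => c * f q) μ p = c * pd4 f μ p := by
  simp [pd4, fderiv_const_mul hf]

theorem pd4_sum {ι : Type*} {s : Finset ι} {f : ι → (Fin 4 → ℝ) → ℝ}
    (hf : ∀ i ∈ s, DifferentiableAt ℝ (f i) p) (μ : Fin 4) :
    pd4 (fun q => ∑ i ∈ s, f i q) μ p = ∑ i ∈ s, pd4 (f i) μ p := by
  simp [pd4, fderiv_fun_sum hf]

theorem pd4_coord (μ ν : Fin 4) (p : Fin 4 → ℝ) :
    pd4 (fun q => q ν) μ p = if μ = ν then 1 else 0 := by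
  simp [pd4, fderiv_apply, Pi.single_apply, eq_comm]

end PartialDerivative

/-- The divergence `η^{αμ} ∂_μ V_α` of a covector field, written with the diagonal entries of
`η`. -/
noncomputable def minkowskiDiv (V : (Fin 4 → ℝ) → Fin 4 → ℝ) (p : Fin 4 → ℝ) : ℝ :=
  ∑ α, eta α α * pd4 (fun q => V q α) α p

theorem minkowskiDiv_eq_sum_eta (V : (Fin 4 → ℝ) → Fin 4 → ℝ) (p : Fin 4 → ℝ) :
    minkowskiDiv V p = ∑ α, ∑ μ, eta α μ * pd4 (fun q => V q α) μ p := by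
  simp only [minkowskiDiv, sum_eta_mul]

theorem minkowskiDiv_add {V U : (Fin 4 → ℝ) → Fin 4 → ℝ}
    (hV : ∀ α, Differentiable ℝ fun p => V p α) (hU : ∀ α, Differentiable ℝ fun p => U p α)
    (p : Fin 4 → ℝ) :
    minkowskiDiv (fun q α => V q α + U q α) p = minkowskiDiv V p + minkowskiDiv U p := by
  simp (disch := fun_prop) only [minkowskiDiv, pd4_add, mul_add, Finset.sum_add_distrib]

theorem minkowskiDiv_sub {V U : (Fin 4 → ℝ) → Fin 4 → ℝ}
    (hV : ∀ α, Differentiable ℝ fun p => V p α) (hU : ∀ α, Differentiable ℝ fun p => U p α)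
    (p : Fin 4 → ℝ) :
    minkowskiDiv (fun q α => V q α - U q α) p = minkowskiDiv V p - minkowskiDiv U p := by
  simp (disch := fun_prop) only [minkowskiDiv, pd4_sub, mul_sub, Finset.sum_sub_distrib]

theorem minkowskiDiv_sum_const_mul {ι : Type*} [Fintype ι] {V : ι → (Fin 4 → ℝ) → Fin 4 → ℝ}
    (hV : ∀ i α, Differentiable ℝ fun p => V i p α) (c : ι → ℝ) (p : Fin 4 → ℝ) :
    minkowskiDiv (fun q α => ∑ i, c i * V i q α) p = ∑ i, c i * minkowskiDiv (V i) p := by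
  simp (disch := fun_prop) only [minkowskiDiv, pd4_sum, pd4_const_mul]
  rw [sum_mul_sum_mul_comm]

theorem minkowskiDiv_eta_mul {N : (Fin 4 → ℝ) → ℝ} (hN : Differentiable ℝ N) (γ : Fin 4)
    (p : Fin 4 → ℝ) : minkowskiDiv (fun q α => eta α γ * N q) p = pd4 N γ p := by
  calc minkowskiDiv (fun q α => eta α γ * N q) p
      = ∑ α, eta γ α * (eta α α * pd4 N α p) := by
        simp (disch := fun_prop) only [minkowskiDiv, pd4_const_mul, eta_comm _ γ,
          mul_left_comm (eta γ _)]
    _ = pd4 N γ p := by rw [sum_eta_mul, ← mul_assoc, eta_mul_self, one_mul]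

theorem differentiable_twoFormInner {F G : (Fin 4 → ℝ) → Fin 4 → Fin 4 → ℝ}
    (hF : ∀ α β, Differentiable ℝ fun p => F p α β)
    (hG : ∀ α β, Differentiable ℝ fun p => G p α β) :
    Differentiable ℝ fun p => twoFormInner (F p) (G p) := by
  unfold twoFormInner
  fun_prop

theorem differentiable_maxwellStress {F G : (Fin 4 → ℝ) → Fin 4 → Fin 4 → ℝ}
    (hF : ∀ α β, Differentiable ℝ fun p => F p α β)
    (hG : ∀ α β, Differentiable ℝ fun p => G p α β) (α γ : Fin 4) :
    Differentiable ℝ fun p => maxwellStress (F p) (G p) α γ := by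
  have := differentiable_twoFormInner hF hG
  unfold maxwellStress
  fun_prop

/-- A solution of the source-free Maxwell equations: a two-form field that is divergence-free and
closed. -/
structure IsMaxwellField (F : (Fin 4 → ℝ) → Fin 4 → Fin 4 → ℝ) : Prop where
  differentiable : ∀ α β, Differentiable ℝ fun p => F p α β
  isTwoForm : ∀ p, IsTwoForm (F p)
  div_eq_zero : ∀ β p, minkowskiDiv (fun q α => F q α β) p = 0
  closed : ∀ l α β p, pd4 (fun q => F q α β) l p + pd4 (fun q => F q β l) α p +
    pd4 (fun q => F q l α) β p = 0

namespace IsMaxwellField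

variable {F G : (Fin 4 → ℝ) → Fin 4 → Fin 4 → ℝ}

theorem div_sum_mul (hF : IsMaxwellField F) (hG : IsMaxwellField G) (γ : Fin 4)
    (p : Fin 4 → ℝ) :
    2 * minkowskiDiv (fun q α => ∑ μ, eta μ μ * (F q α μ * G q γ μ)) p =
      twoFormInner (F p) fun α μ => pd4 (fun q => G q α μ) γ p := by
  have dF := hF.differentiable
  have dG := hG.differentiable
  have product_rule : minkowskiDiv (fun q α => ∑ μ, eta μ μ * (F q α μ * G q γ μ)) p =
      ∑ α, ∑ μ, eta α α * eta μ μ * F p α μ * pd4 (fun q => G q γ μ) α p := by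
    have source_free : ∑ α, ∑ μ, eta α α * (eta μ μ * (pd4 (fun q => F q α μ) α p * G p γ μ)) =
        0 := by
      rw [Finset.sum_comm]
      refine Finset.sum_eq_zero fun μ _ => ?_
      calc ∑ α, eta α α * (eta μ μ * (pd4 (fun q => F q α μ) α p * G p γ μ))
          = minkowskiDiv (fun q α => F q α μ) p * (eta μ μ * G p γ μ) := by
            rw [minkowskiDiv, Finset.sum_mul]
            exact Finset.sum_congr rfl fun α _ => by ring
        _ = 0 := by rw [hF.div_eq_zero, zero_mul]
    simp (disch := fun_prop) only [minkowskiDiv, pd4_sum, pd4_const_mul, pd4_mul, mul_add,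
      Finset.mul_sum, Finset.sum_add_distrib, source_free, zero_add, mul_assoc]
  have closed : ∀ α μ, pd4 (fun q => G q γ μ) α p - pd4 (fun q => G q γ α) μ p =
      pd4 (fun q => G q α μ) γ p := fun α μ => by
    have flip : ∀ α β l, pd4 (fun q => G q α β) l p = -pd4 (fun q => G q β α) l p := fun α β l => by
      rw [← pd4_neg]
      simp only [← hG.isTwoForm _ α β]
    linarith [hG.closed γ α μ p, flip γ μ α]
  rw [product_rule, two_mul_sum_mul_of_antisymm fun α μ => by
    rw [hF.isTwoForm p α μ]; ring]
  simp only [closed, twoFormInner, mul_assoc]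

theorem div_maxwellStress (hF : IsMaxwellField F) (hG : IsMaxwellField G) (γ : Fin 4)
    (p : Fin 4 → ℝ) : minkowskiDiv (fun q α => maxwellStress (F q) (G q) α γ) p = 0 := by
  have dF := hF.differentiable
  have dG := hG.differentiable
  have gradient : pd4 (fun q => twoFormInner (F q) (G q)) γ p =
      twoFormInner (G p) (fun α μ => pd4 (fun q => F q α μ) γ p) +
        twoFormInner (F p) (fun α μ => pd4 (fun q => G q α μ) γ p) := by
    simp (disch := fun_prop) only [twoFormInner, pd4_sum, pd4_const_mul, pd4_mul, mul_add,
      Finset.sum_add_distrib, mul_comm (pd4 _ _ _)]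
  have expand : minkowskiDiv (fun q α => maxwellStress (F q) (G q) α γ) p =
      minkowskiDiv (fun q α => ∑ μ, eta μ μ * (F q α μ * G q γ μ)) p +
        minkowskiDiv (fun q α => ∑ μ, eta μ μ * (G q α μ * F q γ μ)) p -
          1 / 2 * pd4 (fun q => twoFormInner (F q) (G q)) γ p := by
    have dN := differentiable_twoFormInner dF dG
    simp only [maxwellStress, mul_add, Finset.sum_add_distrib, mul_comm (1 / 2 : ℝ) (eta _ _),
      mul_assoc]
    rw [minkowskiDiv_sub (fun α => by fun_prop) fun α => (dN.const_mul _).const_mul _,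
      minkowskiDiv_add (fun α => by fun_prop) fun α => by fun_prop,
      minkowskiDiv_eta_mul (dN.const_mul _), pd4_const_mul dN.differentiableAt]
  linarith [hF.div_sum_mul hG γ p, hG.div_sum_mul hF γ p]

end IsMaxwellField

/-- A conformal Killing field of Minkowski space: `∂_μ X_ν + ∂_ν X_μ = φ η_{μν}` for some
function `φ`. The components of `X` are contravariant, so the equation is stated with
`X_ν = η_{νν} X^ν`. -/
structure IsConformalKilling (X : (Fin 4 → ℝ) → Fin 4 → ℝ) : Prop where
  differentiable : ∀ μ, Differentiable ℝ fun p => X p μ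
  exists_eq_mul_eta : ∀ p, ∃ φ : ℝ, ∀ μ ν,
    eta ν ν * pd4 (fun q => X q ν) μ p + eta μ μ * pd4 (fun q => X q μ) ν p = φ * eta μ ν

/-- The stress tensor of a conformally invariant matter field: symmetric, trace-free and
divergence-free. -/
structure IsStressTensor (S : (Fin 4 → ℝ) → Fin 4 → Fin 4 → ℝ) : Prop where
  differentiable : ∀ α β, Differentiable ℝ fun p => S p α β
  symm : ∀ p α β, S p α β = S p β α
  trace_eq_zero : ∀ p, ∑ α, eta α α * S p α α = 0
  div_eq_zero : ∀ β p, minkowskiDiv (fun q α => S q α β) p = 0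

theorem IsConformalKilling.sum_mul_pd4_eq_zero {X : (Fin 4 → ℝ) → Fin 4 → ℝ}
    (hX : IsConformalKilling X) {S : Fin 4 → Fin 4 → ℝ} (symm : ∀ α β, S α β = S β α)
    (trace : ∑ α, eta α α * S α α = 0) (p : Fin 4 → ℝ) :
    ∑ α, ∑ β, eta α α * (S α β * pd4 (fun q => X q β) α p) = 0 := by
  obtain ⟨φ, hφ⟩ := hX.exists_eq_mul_eta p
  have lower : ∀ α β, eta α α * (S α β * pd4 (fun q => X q β) α p) =
      eta α α * eta β β * S α β * (eta β β * pd4 (fun q => X q β) α p) := fun α β => by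
    linear_combination (-eta α α * S α β * pd4 (fun q => X q β) α p) * eta_mul_self β
  have twice_eq_zero : 2 * ∑ α, ∑ β, eta α α * (S α β * pd4 (fun q => X q β) α p) = 0 := by
    simp only [lower]
    rw [two_mul_sum_mul_of_symm fun α β => by rw [symm α β]; ring]
    calc ∑ α, ∑ β, eta α α * eta β β * S α β *
          (eta β β * pd4 (fun q => X q β) α p + eta α α * pd4 (fun q => X q α) β p)
        = ∑ α, ∑ β, eta α β * (eta α α * eta β β * S α β * φ) := by
          simp only [hφ]
          exact Finset.sum_congr rfl fun α _ => Finset.sum_congr rfl fun β _ => by ring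
      _ = (∑ α, eta α α * S α α) * φ := by
          simp only [sum_eta_mul, Finset.sum_mul]
          refine Finset.sum_congr rfl fun α _ => ?_
          linear_combination (eta α α * S α α * φ) * eta_mul_self α
      _ = 0 := by rw [trace, zero_mul]
  linarith

theorem IsStressTensor.div_contraction_eq_zero {S : (Fin 4 → ℝ) → Fin 4 → Fin 4 → ℝ}
    (hS : IsStressTensor S) {X : (Fin 4 → ℝ) → Fin 4 → ℝ} (hX : IsConformalKilling X)
    (p : Fin 4 → ℝ) : minkowskiDiv (fun q α => ∑ β, X q β * S q α β) p = 0 := by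
  have dS := hS.differentiable
  have dX := hX.differentiable
  calc minkowskiDiv (fun q α => ∑ β, X q β * S q α β) p
      = ∑ β, X p β * minkowskiDiv (fun q α => S q α β) p +
          ∑ α, ∑ β, eta α α * (S p α β * pd4 (fun q => X q β) α p) := by
        simp (disch := fun_prop) only [minkowskiDiv, pd4_sum, pd4_mul, Finset.mul_sum,
          Finset.sum_add_distrib, mul_add]
        rw [add_comm]
        congr 1
        · rw [Finset.sum_comm]
          simp only [mul_left_comm]
        · simp only [mul_comm (pd4 _ _ _)]
    _ = 0 := by
        simp only [hS.div_eq_zero, mul_zero, Finset.sum_const_zero, zero_add]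
        exact hX.sum_mul_pd4_eq_zero (hS.symm p) (hS.trace_eq_zero p) p

/-- The Bel-Robinson current `P_α = Q_{αβγδ} X^β Y^γ Z^δ` of a Weyl field with multipliers
`X`, `Y`, `Z`. -/
noncomputable def belRobinsonCurrent (W : (Fin 4 → ℝ) → Fin 4 → Fin 4 → Fin 4 → Fin 4 → ℝ)
    (X Y Z : (Fin 4 → ℝ) → Fin 4 → ℝ) (α : Fin 4) (p : Fin 4 → ℝ) : ℝ :=
  ∑ β, ∑ γ, ∑ δ, belRobinson (W p) α β γ δ * X p β * Y p γ * Z p δ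

/-- A Weyl field, with differentiable but not necessarily smooth components, that satisfies both
vacuum Bianchi equations. -/
structure IsVacuumWeylField (W : (Fin 4 → ℝ) → Fin 4 → Fin 4 → Fin 4 → Fin 4 → ℝ) : Prop where
  differentiable : ∀ α β γ δ, Differentiable ℝ fun p => W p α β γ δ
  isWeylTensor : ∀ p, IsWeylTensor (W p)
  div_eq_zero : ∀ β γ δ p, minkowskiDiv (fun q α => W q α β γ δ) p = 0
  bianchi : ∀ l α β γ δ p, pd4 (fun q => W q α β γ δ) l p + pd4 (fun q => W q β l γ δ) α p +
    pd4 (fun q => W q l α γ δ) β p = 0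

namespace IsVacuumWeylField

variable {W : (Fin 4 → ℝ) → Fin 4 → Fin 4 → Fin 4 → Fin 4 → ℝ}

theorem isMaxwellField (hW : IsVacuumWeylField W) (γ δ : Fin 4) :
    IsMaxwellField fun p α β => W p α β γ δ where
  differentiable α β := hW.differentiable α β γ δ
  isTwoForm p := (hW.isWeylTensor p).isTwoForm γ δ
  div_eq_zero β := hW.div_eq_zero β γ δ
  closed l α β := hW.bianchi l α β γ δ

theorem differentiable_belRobinson (hW : IsVacuumWeylField W) (α β γ δ : Fin 4) :
    Differentiable ℝ fun p => belRobinson (W p) α β γ δ := by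
  have dW := hW.differentiable
  unfold belRobinson hodge
  fun_prop

theorem div_belRobinson (hW : IsVacuumWeylField W) (β γ δ : Fin 4) (p : Fin 4 → ℝ) :
    minkowskiDiv (fun q α => belRobinson (W q) α β γ δ) p = 0 := by
  have stress_eq := fun q => belRobinson_eq_sum_maxwellStress (hW.isWeylTensor q).isTwoForm
  have hM := hW.isMaxwellField
  have dT := fun ν α =>
    differentiable_maxwellStress (hM β ν).differentiable (hM δ ν).differentiable α γ
  simp only [stress_eq, minkowskiDiv_sum_const_mul dT, (hM β _).div_maxwellStress (hM δ _),
    mul_zero, Finset.sum_const_zero]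

theorem isStressTensor_belRobinson (hW : IsVacuumWeylField W) (β γ : Fin 4) :
    IsStressTensor fun p α δ => belRobinson (W p) α β γ δ where
  differentiable α δ := hW.differentiable_belRobinson α β γ δ
  symm p α δ := (hW.isWeylTensor p).belRobinson_swap_one_four α β γ δ
  trace_eq_zero p := (hW.isWeylTensor p).trace_one_four_belRobinson β γ
  div_eq_zero δ := hW.div_belRobinson β γ δ

theorem isStressTensor_sum_mul_belRobinson (hW : IsVacuumWeylField W)
    {Z : (Fin 4 → ℝ) → Fin 4 → ℝ} (hZ : IsConformalKilling Z) (β : Fin 4) :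
    IsStressTensor fun p α γ => ∑ δ, Z p δ * belRobinson (W p) α β γ δ where
  differentiable α γ := by
    have dQ := hW.differentiable_belRobinson
    have dZ := hZ.differentiable
    fun_prop
  symm p α γ := by simp only [(hW.isWeylTensor p).belRobinson_swap_one_three α]
  trace_eq_zero p := by
    rw [sum_mul_sum_mul_comm]
    simp only [(hW.isWeylTensor p).trace_one_three_belRobinson, mul_zero, Finset.sum_const_zero]
  div_eq_zero γ := (hW.isStressTensor_belRobinson β γ).div_contraction_eq_zero hZ

theorem isStressTensor_sum_mul_sum_mul_belRobinson (hW : IsVacuumWeylField W)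
    {Y Z : (Fin 4 → ℝ) → Fin 4 → ℝ} (hY : IsConformalKilling Y) (hZ : IsConformalKilling Z) :
    IsStressTensor fun p α β => ∑ γ, Y p γ * ∑ δ, Z p δ * belRobinson (W p) α β γ δ where
  differentiable α β := by
    have dQ := hW.differentiable_belRobinson
    have dY := hY.differentiable
    have dZ := hZ.differentiable
    fun_prop
  symm p α β := by simp only [(hW.isWeylTensor p).belRobinson_swap_one_two α]
  trace_eq_zero p := by
    rw [sum_mul_sum_mul_comm]
    simp only [sum_mul_sum_mul_comm (fun α => eta α α),
      (hW.isWeylTensor p).trace_one_two_belRobinson, mul_zero, Finset.sum_const_zero]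
  div_eq_zero β := (hW.isStressTensor_sum_mul_belRobinson hZ β).div_contraction_eq_zero hY

end IsVacuumWeylField

theorem belRobinsonCurrent_eq_sum_mul (W : (Fin 4 → ℝ) → Fin 4 → Fin 4 → Fin 4 → Fin 4 → ℝ)
    (X Y Z : (Fin 4 → ℝ) → Fin 4 → ℝ) (α : Fin 4) (p : Fin 4 → ℝ) :
    belRobinsonCurrent W X Y Z α p =
      ∑ β, X p β * ∑ γ, Y p γ * ∑ δ, Z p δ * belRobinson (W p) α β γ δ := by
  simp only [belRobinsonCurrent, Finset.mul_sum]
  refine Finset.sum_congr rfl fun β _ => Finset.sum_congr rfl fun γ _ =>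
    Finset.sum_congr rfl fun δ _ => ?_
  ring

theorem isConformalKilling_const (v : Fin 4 → ℝ) : IsConformalKilling fun _ => v where
  differentiable μ := by fun_prop
  exists_eq_mul_eta p := ⟨0, fun μ ν => by simp only [pd4_const]; ring⟩

theorem pd4_morawetzK (μ ν : Fin 4) (p : Fin 4 → ℝ) :
    pd4 (fun q => morawetzK q ν) μ p =
      if ν = 0 then 2 * p μ
      else 2 * (if μ = 0 then 1 else 0) * p ν + 2 * p 0 * (if μ = ν then 1 else 0) := by
  by_cases hν : ν = 0
  · simp (disch := fun_prop) only [morawetzK, hν, if_true, pow_two, pd4_add, pd4_mul, pd4_coord]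
    fin_cases μ <;> simp <;> ring
  · simp (disch := fun_prop) only [morawetzK, hν, if_false, pd4_mul, pd4_const, pd4_coord,
      zero_mul, zero_add]

theorem isConformalKilling_morawetzK : IsConformalKilling morawetzK where
  differentiable μ := by
    unfold morawetzK
    split_ifs <;> fun_prop
  exists_eq_mul_eta p := by
    refine ⟨4 * p 0, fun μ ν => ?_⟩
    simp only [pd4_morawetzK]
    fin_cases μ <;> fin_cases ν <;> simp [eta] <;> ring

theorem morawetz_current_divergence_free_general
    {W : (Fin 4 → ℝ) → Fin 4 → Fin 4 → Fin 4 → Fin 4 → ℝ} (hW : IsVacuumWeylField W)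
    {X Y Z : (Fin 4 → ℝ) → Fin 4 → ℝ} (hX : IsConformalKilling X) (hY : IsConformalKilling Y)
    (hZ : IsConformalKilling Z) (p : Fin 4 → ℝ) :
    ∑ α, ∑ μ, eta α μ * pd4 (fun q => belRobinsonCurrent W X Y Z α q) μ p = 0 := by
  rw [← minkowskiDiv_eq_sum_eta]
  simp only [belRobinsonCurrent_eq_sum_mul]
  exact (hW.isStressTensor_sum_mul_sum_mul_belRobinson hY hZ).div_contraction_eq_zero hX p

/-- For a smooth Weyl field satisfying the vacuum Bianchi equations, the Morawetz
energy current `P_α = Q_{αβγδ} K₀^β T^γ T^δ` is divergence-free. -/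
theorem morawetz_current_divergence_free
    (W : (Fin 4 → ℝ) → Fin 4 → Fin 4 → Fin 4 → Fin 4 → ℝ)
    (hSmooth : ∀ α β γ δ : Fin 4, ContDiff ℝ (⊤ : ℕ∞) fun p => W p α β γ δ)
    (hWeyl : ∀ p, IsWeylTensor (W p))
    (hBianchiDiv : ∀ (p : Fin 4 → ℝ) (β γ δ : Fin 4),
      ∑ α, ∑ μ, eta α μ * pd4 (fun q => W q α β γ δ) μ p = 0)
    (hBianchiFull : ∀ (p : Fin 4 → ℝ) (l α β γ δ : Fin 4),
      pd4 (fun q => W q α β γ δ) l p + pd4 (fun q => W q β l γ δ) α p +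
        pd4 (fun q => W q l α γ δ) β p = 0) :
    ∀ p : Fin 4 → ℝ,
      ∑ α, ∑ μ, eta α μ * pd4 (fun q => morawetzCurrent W α q) μ p = 0 := by
  have hW : IsVacuumWeylField W :=
    { differentiable := fun α β γ δ => (hSmooth α β γ δ).differentiable (by simp)
      isWeylTensor := hWeyl
      div_eq_zero := fun β γ δ p => by rw [minkowskiDiv_eq_sum_eta, hBianchiDiv]
      bianchi := fun l α β γ δ p => hBianchiFull p l α β γ δ }
  exact morawetz_current_divergence_free_general hW isConformalKilling_morawetzK
    (isConformalKilling_const Tvec) (isConformalKilling_const Tvec)
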